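/- Let (Φ, Ψ) be a jointly stationary pair of random measures on ℝ^d (the law of (T_tΦ, T_tΨ) equals the law of (Φ, Ψ) for every t) with intensities λ_Φ := E[Φ([0,1)^d)] and λ_Ψ := E[Ψ([0,1)^d)] both in (0,∞). Define the Palm distributions of the pair by P_Φ(B) = λ_Φ⁻¹ E[∫_{[0,1)^d} 1_B(T_xΦ, T_xΨ) dΦ(x)] and P_Ψ(B) = λ_Ψ⁻¹ E[∫_{[0,1)^d} 1_B(T_xΦ, T_xΨ) dΨ(x)] for measurable B ⊆ M(ℝ^d) × M(ℝ^d). Then for every measurable g : M(ℝ^d) × M(ℝ^d) × ℝ^d × ℝ^d → [0,∞] that is translation-covariant (g(T_tφ, T_tψ, x − t, y − t) = g(φ, ψ, x, y)), the exchange formula holds: λ_Φ ∫ (∫ g(φ, ψ, 0, y) dψ(y)) dP_Φ(φ, ψ) = λ_Ψ ∫ (∫ g(φ, ψ, y, 0) dφ(y)) dP_Ψ(φ, ψ). -/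

import Mathlib

open MeasureTheory ENNReal

noncomputable section

/-- `ℝ^d`. -/
abbrev Vec (d : ℕ) := Fin d → ℝ

/-- The shift `T_t ψ`, defined by `(T_t ψ)(A) = ψ(A + t)`. -/
def shiftM {d : ℕ} (t : Vec d) (ψ : Measure (Vec d)) : Measure (Vec d) :=
  ψ.map (fun x => x - t)

/-- A measure is in `M(ℝ^d)` iff it is finite on bounded sets. -/
def BddFinite {d : ℕ} (ψ : Measure (Vec d)) : Prop :=
  ∀ s : Set (Vec d), Bornology.IsBounded s → ψ s < ⊤

/-- Translation covariance of `g : M(ℝ^d) × ℝ^d × ℝ^d → [0,∞]`. -/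
def Covariant3 {d : ℕ} (g : Measure (Vec d) → Vec d → Vec d → ℝ≥0∞) : Prop :=
  ∀ (t x y : Vec d) (ψ : Measure (Vec d)), g (shiftM t ψ) (x - t) (y - t) = g ψ x y

/-- A random measure `Ψ` on a probability space `(Ω, P)` is mass-stationary if the mass
transport principle holds for every translation-covariant measurable `g`. -/
def MassStationary {d : ℕ} {Ω : Type*} [MeasurableSpace Ω] (P : Measure Ω)
    (Ψ : Ω → Measure (Vec d)) : Prop :=
  ∀ g : Measure (Vec d) → Vec d → Vec d → ℝ≥0∞,
    Measurable (fun p : Measure (Vec d) × Vec d × Vec d => g p.1 p.2.1 p.2.2) →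
    Covariant3 g →
    ∫⁻ ω, (∫⁻ y, g (Ψ ω) 0 y ∂(Ψ ω)) ∂P = ∫⁻ ω, (∫⁻ y, g (Ψ ω) y 0 ∂(Ψ ω)) ∂P

/-- The unit box `[0,1)^d`. -/
def unitBox (d : ℕ) : Set (Vec d) := Set.univ.pi fun _ : Fin d => Set.Ico (0 : ℝ) 1

/-!
Let a group `V` act measurably on `X`, and let `κ`, `η` be kernels from `X` to `V` that commute with
the action. The Palm measure of `κ` is the image of `Q ⊗ₘ κ`, restricted to `x ∈ D` for a cell `D`,
under the recentering `(p, x) ↦ -x +ᵥ p`; by covariance, undoing the recentering turns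
`∫ g p 0 y ∂η p` into `∫ g p x y ∂η p`. So both sides of the exchange formula integrate `g` against
`Q ⊗ₘ (κ ×ₖ η)`, the left side over `{(p, x, y) | x ∈ D}` and the right side over
`{(p, x, y) | y ∈ D}`. If the translates of `D` by a countable subgroup `L` tile `V`, both sets are
fundamental domains for the diagonal action of `L`, which preserves the measure and `g`; hence the
two integrals agree. For the theorem, `X` is `M(ℝ^d) × M(ℝ^d)`, `L` is `ℤ^d` and `D` is `[0,1)^d`.
-/

open ProbabilityTheory

section EquivariantKernel

variable {G X Y Z : Type*} [MeasurableSpace X] [MeasurableSpace Y] [MeasurableSpace Z]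

instance measurableConstVAdd_prod [VAdd G X] [VAdd G Y] [MeasurableConstVAdd G X]
    [MeasurableConstVAdd G Y] : MeasurableConstVAdd G (X × Y) where
  measurable_const_vadd t :=
    (measurable_fst.const_vadd t).prodMk (measurable_snd.const_vadd t)

instance measurableVAdd₂_prod [MeasurableSpace G] [VAdd G X] [VAdd G Y] [MeasurableVAdd₂ G X]
    [MeasurableVAdd₂ G Y] : MeasurableVAdd₂ G (X × Y) where
  measurable_vadd :=
    (measurable_fst.vadd measurable_snd.fst).prodMk (measurable_fst.vadd measurable_snd.snd)

/-- A kernel is equivariant if moving its argument by `t` moves the resulting measure by `t`. -/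
def IsEquivariantKernel (G : Type*) [VAdd G X] [VAdd G Y] (κ : Kernel X Y) : Prop :=
  ∀ (t : G) (p : X), κ (t +ᵥ p) = (κ p).map (t +ᵥ ·)

namespace IsEquivariantKernel

lemma addSubgroup {V : Type*} [AddGroup V] [AddAction V X] [AddAction V Y] {κ : Kernel X Y}
    (hκ : IsEquivariantKernel V κ) (L : AddSubgroup V) : IsEquivariantKernel L κ :=
  fun t p => hκ t p

variable [VAdd G X] [VAdd G Y]

lemma comap [VAdd G Z] {κ : Kernel X Y} (hκ : IsEquivariantKernel G κ) {f : Z → X}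
    (hf : Measurable f) (hfG : ∀ (t : G) (z : Z), f (t +ᵥ z) = t +ᵥ f z) :
    IsEquivariantKernel G (κ.comap f hf) := fun t z => by
  simp only [Kernel.comap_apply, hfG, hκ t]

lemma prod [VAdd G Z] [MeasurableConstVAdd G Y] [MeasurableConstVAdd G Z]
    {κ : Kernel X Y} {η : Kernel X Z} [IsSFiniteKernel κ] [IsSFiniteKernel η]
    (hκ : IsEquivariantKernel G κ) (hη : IsEquivariantKernel G η) :
    IsEquivariantKernel G (κ ×ₖ η) := fun t p => by
  rw [Kernel.prod_apply, Kernel.prod_apply, hκ, hη,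
    Measure.map_prod_map _ _ (measurable_const_vadd t) (measurable_const_vadd t)]
  rfl

lemma vaddInvariantMeasure_compProd [MeasurableConstVAdd G X] [MeasurableConstVAdd G Y]
    {κ : Kernel X Y} [IsSFiniteKernel κ] (hκ : IsEquivariantKernel G κ) (Q : Measure X) [SFinite Q]
    [VAddInvariantMeasure G X Q] : VAddInvariantMeasure G (X × Y) (Q ⊗ₘ κ) where
  measure_preimage_vadd t s hs := by
    have h_fiber (p : X) : κ p (Prod.mk p ⁻¹' ((t +ᵥ ·) ⁻¹' s)) =
        κ (t +ᵥ p) (Prod.mk (t +ᵥ p) ⁻¹' s) := by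
      rw [hκ, Measure.map_apply (measurable_const_vadd t) (measurable_prodMk_left hs)]
      rfl
    rw [Measure.compProd_apply (measurable_const_vadd t hs), Measure.compProd_apply hs]
    simp only [h_fiber]
    exact (measurePreserving_vadd t Q).lintegral_comp (Kernel.measurable_kernel_prodMk_left hs)

end IsEquivariantKernel

end EquivariantKernel

section MassTransport

variable {L X Y Z : Type*} [MeasurableSpace X] [MeasurableSpace Y] [MeasurableSpace Z]
  [AddGroup L] [AddAction L X] [AddAction L Y] [AddAction L Z]

lemma isAddFundamentalDomain_preimage {f : X → Y} (hf : Measurable f)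
    (hfL : ∀ (l : L) (p : X), f (l +ᵥ p) = l +ᵥ f p) {D : Set Y} (hD : MeasurableSet D)
    (hDL : ∀ y, ∃! l : L, l +ᵥ y ∈ D) (μ : Measure X) : IsAddFundamentalDomain L (f ⁻¹' D) μ :=
  .mk' (hf hD).nullMeasurableSet fun p => by
    simpa only [Set.mem_preimage, hfL] using hDL (f p)

theorem lintegral_mass_transport [Countable L] [MeasurableConstVAdd L X]
    [MeasurableConstVAdd L Y] [MeasurableConstVAdd L Z]
    (Q : Measure X) [SFinite Q] [VAddInvariantMeasure L X Q]
    {κ : Kernel X Y} {η : Kernel X Z} [IsSFiniteKernel κ] [IsSFiniteKernel η]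
    (hκ : IsEquivariantKernel L κ) (hη : IsEquivariantKernel L η)
    {D : Set Y} (hD : MeasurableSet D) (hDL : ∀ y, ∃! l : L, l +ᵥ y ∈ D)
    {E : Set Z} (hE : MeasurableSet E) (hEL : ∀ z, ∃! l : L, l +ᵥ z ∈ E)
    {g : X → Y → Z → ℝ≥0∞} (hg : Measurable fun q : X × Y × Z => g q.1 q.2.1 q.2.2)
    (hgL : ∀ (l : L) p y z, g (l +ᵥ p) (l +ᵥ y) (l +ᵥ z) = g p y z) :
    ∫⁻ p, ∫⁻ y in D, ∫⁻ z, g p y z ∂η p ∂κ p ∂Q =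
      ∫⁻ p, ∫⁻ z in E, ∫⁻ y, g p y z ∂κ p ∂η p ∂Q := by
  let μ : Measure (X × Y × Z) := Q ⊗ₘ (κ ×ₖ η)
  have hμ : VAddInvariantMeasure L (X × Y × Z) μ := (hκ.prod hη).vaddInvariantMeasure_compProd Q
  have hgp (p : X) : Measurable fun q : Y × Z => g p q.1 q.2 := hg.comp measurable_prodMk_left
  calc ∫⁻ p, ∫⁻ y in D, ∫⁻ z, g p y z ∂η p ∂κ p ∂Q
      = ∫⁻ q in Set.univ ×ˢ (D ×ˢ Set.univ), g q.1 q.2.1 q.2.2 ∂μ := by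
        rw [Measure.setLIntegral_compProd hg .univ (hD.prod .univ), setLIntegral_univ]
        refine lintegral_congr fun p => ?_
        rw [Kernel.prod_apply, ← Measure.prod_restrict, Measure.restrict_univ,
          lintegral_prod _ (hgp p).aemeasurable]
    _ = ∫⁻ q in Set.univ ×ˢ (Set.univ ×ˢ E), g q.1 q.2.1 q.2.2 ∂μ := by
        have h_left := isAddFundamentalDomain_preimage (L := L) (measurable_fst.comp measurable_snd)
          (fun _ (_ : X × Y × Z) => rfl) hD hDL μ
        have h_right := isAddFundamentalDomain_preimage (L := L)
          (measurable_snd.comp measurable_snd) (fun _ (_ : X × Y × Z) => rfl) hE hEL μ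
        simpa only [Set.univ_prod, Set.prod_univ, Set.preimage_comp] using
          h_left.setLIntegral_eq h_right _ fun l q => hgL l q.1 q.2.1 q.2.2
    _ = ∫⁻ p, ∫⁻ z in E, ∫⁻ y, g p y z ∂κ p ∂η p ∂Q := by
        rw [Measure.setLIntegral_compProd hg .univ (.prod .univ hE), setLIntegral_univ]
        refine lintegral_congr fun p => ?_
        rw [Kernel.prod_apply, ← Measure.prod_restrict, Measure.restrict_univ,
          lintegral_prod_symm _ (hgp p).aemeasurable]

end MassTransport

section Palm

variable {V X : Type*} [MeasurableSpace V] [MeasurableSpace X] [AddGroup V] [AddAction V X]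

/-- The unnormalised Palm measure of `κ` under `Q`: the point of `X` is recentered at each point of
`D`, weighted by `κ`. For a unit cell `D` it is the intensity times the Palm distribution. -/
def palmMeasure (Q : Measure X) (κ : Kernel X V) (D : Set V) : Measure X :=
  ((Q ⊗ₘ κ).restrict (Set.univ ×ˢ D)).map fun q : X × V => -q.2 +ᵥ q.1

variable [MeasurableNeg V] [MeasurableVAdd₂ V X] (Q : Measure X) [SFinite Q]
  {κ η : Kernel X V} [IsSFiniteKernel κ] [IsSFiniteKernel η] {D : Set V}

lemma lintegral_palmMeasure (hD : MeasurableSet D) {F : X → ℝ≥0∞} (hF : Measurable F) :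
    ∫⁻ p, F p ∂palmMeasure Q κ D = ∫⁻ p, ∫⁻ x in D, F (-x +ᵥ p) ∂κ p ∂Q := by
  have h_recenter : Measurable fun q : X × V => -q.2 +ᵥ q.1 :=
    measurable_snd.neg.vadd measurable_fst
  rw [palmMeasure, lintegral_map hF h_recenter]
  exact (Measure.setLIntegral_compProd (hF.comp h_recenter) .univ hD).trans (setLIntegral_univ _)

lemma palmMeasure_apply_map {Ω : Type*} [MeasurableSpace Ω] (P : Measure Ω) [SFinite P] {ζ : Ω → X}
    (hζ : Measurable ζ) (hD : MeasurableSet D) {B : Set X} (hB : MeasurableSet B) :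
    palmMeasure (P.map ζ) κ D B =
      ∫⁻ ω, ∫⁻ x in D, B.indicator (fun _ => 1) (-x +ᵥ ζ ω) ∂κ (ζ ω) ∂P := by
  have hF : Measurable (B.indicator fun _ => (1 : ℝ≥0∞)) := measurable_const.indicator hB
  have h_recenter : Measurable fun q : X × V => B.indicator (fun _ => (1 : ℝ≥0∞)) (-q.2 +ᵥ q.1) :=
    hF.comp (measurable_snd.neg.vadd measurable_fst)
  rw [← lintegral_indicator_one hB]
  exact (lintegral_palmMeasure _ hD hF).trans
    (lintegral_map (h_recenter.setLIntegral_kernel_prod_right hD) hζ)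

lemma lintegral_lintegral_palmMeasure [MeasurableConstVAdd V V] (hη : IsEquivariantKernel V η)
    (hD : MeasurableSet D)
    {g : X → V → V → ℝ≥0∞} (hg : Measurable fun q : X × V × V => g q.1 q.2.1 q.2.2)
    (hgV : ∀ (t : V) p x y, g (t +ᵥ p) (t +ᵥ x) (t +ᵥ y) = g p x y) :
    ∫⁻ p, ∫⁻ y, g p 0 y ∂η p ∂palmMeasure Q κ D =
      ∫⁻ p, ∫⁻ x in D, ∫⁻ y, g p x y ∂η p ∂κ p ∂Q := by
  have hg_zero (p : X) : Measurable (g p 0) :=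
    hg.comp (measurable_const.prodMk (measurable_const.prodMk measurable_id))
  have h_recenter (p : X) (x : V) :
      ∫⁻ y, g (-x +ᵥ p) 0 y ∂η (-x +ᵥ p) = ∫⁻ y, g p x y ∂η p := by
    rw [hη, lintegral_map (hg_zero _) (measurable_const_vadd _)]
    refine lintegral_congr fun y => ?_
    simpa using hgV (-x) p x y
  have h_inner : Measurable fun p => ∫⁻ y, g p 0 y ∂η p :=
    Measurable.lintegral_kernel_prod_right (κ := η) <|
      hg.comp (measurable_fst.prodMk (measurable_const.prodMk measurable_snd))
  simp only [lintegral_palmMeasure Q hD h_inner, h_recenter]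

theorem palmMeasure_exchange_formula [MeasurableConstVAdd V V] (L : AddSubgroup V) [Countable L]
    [VAddInvariantMeasure L X Q] (hκ : IsEquivariantKernel V κ) (hη : IsEquivariantKernel V η)
    (hD : MeasurableSet D) (hDL : ∀ x, ∃! l : L, l +ᵥ x ∈ D)
    {g : X → V → V → ℝ≥0∞} (hg : Measurable fun q : X × V × V => g q.1 q.2.1 q.2.2)
    (hgV : ∀ (t : V) p x y, g (t +ᵥ p) (t +ᵥ x) (t +ᵥ y) = g p x y) :
    ∫⁻ p, ∫⁻ y, g p 0 y ∂η p ∂palmMeasure Q κ D =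
      ∫⁻ p, ∫⁻ x, g p x 0 ∂κ p ∂palmMeasure Q η D := by
  have hg_swap : Measurable fun q : X × V × V => g q.1 q.2.2 q.2.1 :=
    hg.comp (measurable_fst.prodMk (measurable_snd.snd.prodMk measurable_snd.fst))
  rw [lintegral_lintegral_palmMeasure Q hη hD hg hgV,
    lintegral_lintegral_palmMeasure (g := fun p x y => g p y x) Q hκ hD hg_swap
      fun t p x y => hgV t p y x]
  exact lintegral_mass_transport Q (hκ.addSubgroup L) (hη.addSubgroup L) hD hDL hD hDL hg
    fun l => hgV l

end Palm

section SFiniteKernel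

variable {α β : Type*} [MeasurableSpace α] [MeasurableSpace β]

lemma isSFiniteKernel_of_isFiniteMeasure (κ : Kernel α β) [∀ a, IsFiniteMeasure (κ a)] :
    IsSFiniteKernel κ := by
  have h_mass : Measurable fun a => κ a Set.univ := κ.measurable_coe .univ
  let normalized : Kernel α β :=
    ⟨fun a => (κ a Set.univ)⁻¹ • κ a, Measure.measurable_of_measurable_coe _ fun s hs =>
      h_mass.inv.mul (κ.measurable_coe hs)⟩
  have h_normalized : IsFiniteKernel normalized :=
    ⟨1, ENNReal.one_lt_top, fun a => ENNReal.inv_mul_le_one (κ a Set.univ)⟩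
  have h_eq : κ = normalized.withDensity fun a _ => κ a Set.univ := by
    ext a : 1
    rw [Kernel.withDensity_apply (f := fun a _ => κ a Set.univ) _ (h_mass.comp measurable_fst),
      withDensity_const]
    change κ a = κ a Set.univ • (κ a Set.univ)⁻¹ • κ a
    rcases eq_or_ne (κ a) 0 with h_zero | h_ne_zero
    · simp [h_zero]
    · rw [smul_smul, ENNReal.mul_inv_cancel (Measure.measure_univ_ne_zero.mpr h_ne_zero)
        (measure_ne_top _ _), one_smul]
  rw [h_eq]
  exact Kernel.IsSFiniteKernel.withDensity normalized fun a _ => measure_ne_top (κ a) _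

lemma isSFiniteKernel_of_iUnion_eq_univ (κ : Kernel α β) {s : ℕ → Set β}
    (hs : ∀ n, MeasurableSet (s n)) (hs_univ : ⋃ n, s n = Set.univ)
    (hκ : ∀ a n, κ a (s n) < ⊤) : IsSFiniteKernel κ := by
  have hd (n : ℕ) : MeasurableSet (disjointed s n) := .disjointed hs n
  have h_sum : κ = Kernel.sum fun n => κ.restrict (hd n) := by
    ext a : 1
    simp only [Kernel.sum_apply, Kernel.restrict_apply]
    rw [← Measure.restrict_iUnion (disjoint_disjointed s) hd, iUnion_disjointed, hs_univ,
      Measure.restrict_univ]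
  have h_piece (n : ℕ) : IsSFiniteKernel (κ.restrict (hd n)) := by
    have h_finite (a : α) : IsFiniteMeasure (κ.restrict (hd n) a) := by
      rw [Kernel.restrict_apply, isFiniteMeasure_restrict]
      exact ((measure_mono (disjointed_subset s n)).trans_lt (hκ a n)).ne
    exact isSFiniteKernel_of_isFiniteMeasure _
  rw [h_sum]
  infer_instance

end SFiniteKernel

section BddFiniteMeasure

variable {d : ℕ}

lemma bddFinite_iff_forall_closedBall {φ : Measure (Vec d)} :
    BddFinite φ ↔ ∀ n : ℕ, φ (Metric.closedBall 0 n) < ⊤ := by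
  refine ⟨fun h n => h _ Metric.isBounded_closedBall, fun h s hs => ?_⟩
  obtain ⟨r, hr⟩ := hs.subset_closedBall 0
  obtain ⟨n, hn⟩ := exists_nat_ge r
  exact (measure_mono (hr.trans (Metric.closedBall_subset_closedBall hn))).trans_lt (h n)

lemma measurableSet_bddFinite : MeasurableSet {φ : Measure (Vec d) | BddFinite φ} := by
  simp only [bddFinite_iff_forall_closedBall, Set.ofPred_forall]
  exact .iInter fun n => measurableSet_lt
    (Measure.measurable_coe Metric.isClosed_closedBall.measurableSet) measurable_const

lemma BddFinite.map_vadd {φ : Measure (Vec d)} (hφ : BddFinite φ) (t : Vec d) :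
    BddFinite (φ.map (t +ᵥ ·)) := fun s hs => by
  rw [(measurableEmbedding_const_vadd t).map_apply, Set.preimage_vadd]
  exact hφ _ (hs.vadd _)

/-- The space `M(ℝ^d)`, as a subtype. On it, unlike on the type of all measures, translation is
jointly measurable in the measure and the translation vector. -/
abbrev BddFiniteMeasure (d : ℕ) := {φ : Measure (Vec d) // BddFinite φ}

namespace BddFiniteMeasure

instance : AddAction (Vec d) (BddFiniteMeasure d) where
  vadd t φ := ⟨φ.1.map (t +ᵥ ·), φ.2.map_vadd t⟩
  zero_vadd φ := Subtype.ext <| by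
    change φ.1.map (fun x => (0 : Vec d) +ᵥ x) = φ.1
    simp
  add_vadd s t φ := Subtype.ext <| by
    change φ.1.map (fun x => (s + t) +ᵥ x) = (φ.1.map (t +ᵥ ·)).map (s +ᵥ ·)
    rw [Measure.map_map (measurable_const_vadd s) (measurable_const_vadd t)]
    simp only [Function.comp_def, add_vadd]

lemma coe_vadd (t : Vec d) (φ : BddFiniteMeasure d) :
    ((t +ᵥ φ : BddFiniteMeasure d) : Measure (Vec d)) = shiftM (-t) φ := by
  simp only [shiftM, sub_neg_eq_add, add_comm _ t]
  rfl

/-- The inclusion of `M(ℝ^d)` into the measures on `ℝ^d`, as a kernel. -/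
def coeKernel (d : ℕ) : Kernel (BddFiniteMeasure d) (Vec d) := ⟨Subtype.val, measurable_subtype_coe⟩

lemma isEquivariantKernel_coeKernel : IsEquivariantKernel (Vec d) (coeKernel d) :=
  fun _ _ => rfl

instance : IsSFiniteKernel (coeKernel d) :=
  isSFiniteKernel_of_iUnion_eq_univ _ (fun _ => Metric.isClosed_closedBall.measurableSet)
    (Metric.iUnion_closedBall_nat 0) fun φ _ => φ.2 _ Metric.isBounded_closedBall

instance : MeasurableVAdd₂ (Vec d) (BddFiniteMeasure d) where
  measurable_vadd := by
    refine .subtype_mk <| Measure.measurable_of_measurable_coe _ fun s hs => ?_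
    have h_preimage : MeasurableSet
        {r : (Vec d × BddFiniteMeasure d) × Vec d | r.1.1 +ᵥ r.2 ∈ s} :=
      (measurable_fst.fst.vadd measurable_snd) hs
    convert Kernel.measurable_kernel_prodMk_left (κ := (coeKernel d).prodMkLeft (Vec d))
      h_preimage using 2 with q
    exact Measure.map_apply (measurable_const_vadd q.1) hs

/-- The first measure of a pair, as a kernel. -/
def fstKernel (d : ℕ) : Kernel (BddFiniteMeasure d × BddFiniteMeasure d) (Vec d) :=
  (coeKernel d).comap Prod.fst measurable_fst

/-- The second measure of a pair, as a kernel. -/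
def sndKernel (d : ℕ) : Kernel (BddFiniteMeasure d × BddFiniteMeasure d) (Vec d) :=
  (coeKernel d).comap Prod.snd measurable_snd

instance : IsSFiniteKernel (fstKernel d) := inferInstanceAs (IsSFiniteKernel (Kernel.comap _ _ _))

instance : IsSFiniteKernel (sndKernel d) := inferInstanceAs (IsSFiniteKernel (Kernel.comap _ _ _))

lemma isEquivariantKernel_fstKernel : IsEquivariantKernel (Vec d) (fstKernel d) :=
  isEquivariantKernel_coeKernel.comap measurable_fst fun _ _ => rfl

lemma isEquivariantKernel_sndKernel : IsEquivariantKernel (Vec d) (sndKernel d) :=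
  isEquivariantKernel_coeKernel.comap measurable_snd fun _ _ => rfl

/-- The inclusion of `M(ℝ^d) × M(ℝ^d)` into the pairs of measures on `ℝ^d`. -/
def coePair (p : BddFiniteMeasure d × BddFiniteMeasure d) :
    Measure (Vec d) × Measure (Vec d) :=
  (p.1, p.2)

lemma measurableEmbedding_coePair : MeasurableEmbedding (coePair (d := d)) :=
  (MeasurableEmbedding.subtype_coe measurableSet_bddFinite).prodMap
    (MeasurableEmbedding.subtype_coe measurableSet_bddFinite)

lemma coePair_vadd (t : Vec d) (p : BddFiniteMeasure d × BddFiniteMeasure d) :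
    coePair (t +ᵥ p) = (shiftM (-t) p.1, shiftM (-t) p.2) :=
  Prod.ext (coe_vadd t p.1) (coe_vadd t p.2)

end BddFiniteMeasure

end BddFiniteMeasure

section UnitBox

/-- The lattice `ℤ^d` in `ℝ^d`. -/
def integerLattice (d : ℕ) : AddSubgroup (Vec d) :=
  (Submodule.span ℤ (Set.range (Pi.basisFun ℝ (Fin d)))).toAddSubgroup

instance (d : ℕ) : Countable (integerLattice d) :=
  inferInstanceAs (Countable (Submodule.span ℤ (Set.range (Pi.basisFun ℝ (Fin d)))))

lemma measurableSet_unitBox (d : ℕ) : MeasurableSet (unitBox d) :=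
  .univ_pi fun _ => measurableSet_Ico

lemma existsUnique_integerLattice_vadd_mem_unitBox {d : ℕ} (x : Vec d) :
    ∃! l : integerLattice d, l +ᵥ x ∈ unitBox d := by
  rw [unitBox, ← ZSpan.fundamentalDomain_pi_basisFun]
  exact ZSpan.exist_unique_vadd_mem_fundamentalDomain (Pi.basisFun ℝ (Fin d)) x

end UnitBox

section RandomMeasure

open BddFiniteMeasure

variable {d : ℕ} {Ω : Type*} [MeasurableSpace Ω] {P : Measure Ω}
  {Φ Ψ : Ω → Measure (Vec d)} {Φ' Ψ' : Ω → BddFiniteMeasure d}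

lemma exists_measurable_bddFiniteMeasure_ae_eq (hΦm : Measurable Φ)
    (hΦ : ∀ᵐ ω ∂P, BddFinite (Φ ω)) :
    ∃ Φ' : Ω → BddFiniteMeasure d, Measurable Φ' ∧ ∀ᵐ ω ∂P, Φ' ω = Φ ω := by
  have h_zero : BddFinite (0 : Measure (Vec d)) := fun _ _ => by simp
  obtain ⟨Φ₀, hΦ₀m, hΦ₀, h_eq⟩ :=
    hΦm.aemeasurable.exists_ae_eq_range_subset (t := {φ | BddFinite φ}) hΦ ⟨0, h_zero⟩
  exact ⟨fun ω => ⟨Φ₀ ω, hΦ₀ (Set.mem_range_self ω)⟩, hΦ₀m.subtype_mk, h_eq.symm⟩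

lemma vaddInvariantMeasure_map_pair (L : AddSubgroup (Vec d))
    (hΦ'm : Measurable Φ') (hΨ'm : Measurable Ψ')
    (hΦ' : ∀ᵐ ω ∂P, Φ' ω = Φ ω) (hΨ' : ∀ᵐ ω ∂P, Ψ' ω = Ψ ω)
    (hstat : ∀ t ∈ L,
      P.map (fun ω => (shiftM t (Φ ω), shiftM t (Ψ ω))) = P.map (fun ω => (Φ ω, Ψ ω))) :
    VAddInvariantMeasure L (BddFiniteMeasure d × BddFiniteMeasure d)
      (P.map fun ω => (Φ' ω, Ψ' ω)) := by
  have hm : Measurable fun ω => (Φ' ω, Ψ' ω) := hΦ'm.prodMk hΨ'm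
  have hcoe : Measurable (coePair (d := d)) := measurableEmbedding_coePair.measurable
  refine ⟨fun t B hB => ?_⟩
  have ht := measurable_const_vadd (α := BddFiniteMeasure d × BddFiniteMeasure d) t
  have h_map : (P.map fun ω => (Φ' ω, Ψ' ω)).map (t +ᵥ ·) = P.map fun ω => (Φ' ω, Ψ' ω) := by
    refine measurableEmbedding_coePair.map_injective ?_
    calc ((P.map fun ω => (Φ' ω, Ψ' ω)).map (t +ᵥ ·)).map coePair
        = P.map fun ω => coePair ((t : Vec d) +ᵥ (Φ' ω, Ψ' ω)) := by
          rw [Measure.map_map ht hm, Measure.map_map hcoe (ht.comp hm)]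
          rfl
      _ = P.map fun ω => (shiftM (-(t : Vec d)) (Φ ω), shiftM (-(t : Vec d)) (Ψ ω)) := by
          refine Measure.map_congr ?_
          filter_upwards [hΦ', hΨ'] with ω hΦω hΨω
          rw [coePair_vadd, hΦω, hΨω]
      _ = P.map fun ω => (Φ ω, Ψ ω) := hstat _ (neg_mem t.2)
      _ = (P.map fun ω => (Φ' ω, Ψ' ω)).map coePair := by
          rw [Measure.map_map hcoe hm]
          refine Measure.map_congr ?_
          filter_upwards [hΦ', hΨ'] with ω hΦω hΨω
          exact Prod.ext hΦω.symm hΨω.symm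
  rw [← Measure.map_apply ht hB, h_map]

lemma map_coePair_palmMeasure [SFinite P] (hΦ'm : Measurable Φ') (hΨ'm : Measurable Ψ')
    (hΦ' : ∀ᵐ ω ∂P, Φ' ω = Φ ω) (hΨ' : ∀ᵐ ω ∂P, Ψ' ω = Ψ ω)
    {κ : Kernel (BddFiniteMeasure d × BddFiniteMeasure d) (Vec d)} [IsSFiniteKernel κ]
    {ξ : Ω → Measure (Vec d)} (hξ : ∀ᵐ ω ∂P, κ (Φ' ω, Ψ' ω) = ξ ω)
    {D : Set (Vec d)} (hD : MeasurableSet D) {C : Measure (Measure (Vec d) × Measure (Vec d))}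
    (hC : ∀ B, MeasurableSet B → C B = ∫⁻ ω, ∫⁻ x in D,
      B.indicator (fun _ => (1 : ℝ≥0∞)) (shiftM x (Φ ω), shiftM x (Ψ ω)) ∂ξ ω ∂P) :
    (palmMeasure (P.map fun ω => (Φ' ω, Ψ' ω)) κ D).map coePair = C := by
  ext B hB
  rw [measurableEmbedding_coePair.map_apply, hC B hB, palmMeasure_apply_map P
    (hΦ'm.prodMk hΨ'm) hD (measurableEmbedding_coePair.measurable hB)]
  refine lintegral_congr_ae ?_
  filter_upwards [hΦ', hΨ', hξ] with ω hΦω hΨω hξω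
  rw [hξω]
  refine lintegral_congr fun x => ?_
  have h_coe : coePair (-x +ᵥ (Φ' ω, Ψ' ω)) = (shiftM x (Φ ω), shiftM x (Ψ ω)) := by
    rw [coePair_vadd, neg_neg, hΦω, hΨω]
  rw [← h_coe]
  rfl

end RandomMeasure

open BddFiniteMeasure in
theorem stmt15_general {d : ℕ} {Ω : Type*} [MeasurableSpace Ω] (P : Measure Ω) [SFinite P]
    (Φ Ψ : Ω → Measure (Vec d)) (hΦm : Measurable Φ) (hΨm : Measurable Ψ)
    (hbfΦ : ∀ᵐ ω ∂P, BddFinite (Φ ω)) (hbfΨ : ∀ᵐ ω ∂P, BddFinite (Ψ ω))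
    (hstat : ∀ t ∈ integerLattice d,
      P.map (fun ω => (shiftM t (Φ ω), shiftM t (Ψ ω))) = P.map (fun ω => (Φ ω, Ψ ω)))
    (CΦ CΨ : Measure (Measure (Vec d) × Measure (Vec d)))
    (hCΦ : ∀ B, MeasurableSet B → CΦ B = ∫⁻ ω, ∫⁻ x in unitBox d,
      B.indicator (fun _ => (1 : ℝ≥0∞)) (shiftM x (Φ ω), shiftM x (Ψ ω)) ∂Φ ω ∂P)
    (hCΨ : ∀ B, MeasurableSet B → CΨ B = ∫⁻ ω, ∫⁻ x in unitBox d,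
      B.indicator (fun _ => (1 : ℝ≥0∞)) (shiftM x (Φ ω), shiftM x (Ψ ω)) ∂Ψ ω ∂P)
    (g : Measure (Vec d) → Measure (Vec d) → Vec d → Vec d → ℝ≥0∞)
    (hgm : Measurable (fun p : (Measure (Vec d) × Measure (Vec d)) × Vec d × Vec d =>
      g p.1.1 p.1.2 p.2.1 p.2.2))
    (hgcov : ∀ (t x y : Vec d) (φ ψ : Measure (Vec d)),
      g (shiftM t φ) (shiftM t ψ) (x - t) (y - t) = g φ ψ x y) :
    ∫⁻ p, ∫⁻ y, g p.1 p.2 0 y ∂p.2 ∂CΦ = ∫⁻ p, ∫⁻ y, g p.1 p.2 y 0 ∂p.1 ∂CΨ := by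
  obtain ⟨Φ', hΦ'm, hΦ'⟩ := exists_measurable_bddFiniteMeasure_ae_eq hΦm hbfΦ
  obtain ⟨Ψ', hΨ'm, hΨ'⟩ := exists_measurable_bddFiniteMeasure_ae_eq hΨm hbfΨ
  have h_inv := vaddInvariantMeasure_map_pair (integerLattice d) hΦ'm hΨ'm hΦ' hΨ' hstat
  have hgV (t : Vec d) (p : BddFiniteMeasure d × BddFiniteMeasure d) (x y : Vec d) :
      g (t +ᵥ p).1 (t +ᵥ p).2 (t +ᵥ x) (t +ᵥ y) = g p.1 p.2 x y := by
    simpa [coe_vadd, add_comm t] using hgcov (-t) x y p.1 p.2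
  rw [← map_coePair_palmMeasure (κ := fstKernel d) hΦ'm hΨ'm hΦ' hΨ' hΦ'
      (measurableSet_unitBox d) hCΦ,
    ← map_coePair_palmMeasure (κ := sndKernel d) hΦ'm hΨ'm hΦ' hΨ' hΨ'
      (measurableSet_unitBox d) hCΨ,
    measurableEmbedding_coePair.lintegral_map, measurableEmbedding_coePair.lintegral_map]
  exact palmMeasure_exchange_formula _ (integerLattice d) isEquivariantKernel_fstKernel
    isEquivariantKernel_sndKernel (measurableSet_unitBox d)
    existsUnique_integerLattice_vadd_mem_unitBox
    (hgm.comp (measurableEmbedding_coePair.measurable.prodMap measurable_id)) hgV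

/-- Neveu's exchange formula.  Let `(Φ, Ψ)` be a jointly stationary pair of
random measures on `ℝ^d` with intensities `λ_Φ, λ_Ψ ∈ (0,∞)` and Palm distributions `P_Φ`,
`P_Ψ` (of the pair).  Then for every translation-covariant measurable
`g : M(ℝ^d) × M(ℝ^d) × ℝ^d × ℝ^d → [0,∞]`,
`λ_Φ ∫ (∫ g φ ψ 0 y dψ(y)) dP_Φ(φ,ψ) = λ_Ψ ∫ (∫ g φ ψ y 0 dφ(y)) dP_Ψ(φ,ψ)`. -/
theorem stmt15 {d : ℕ} {Ω : Type*} [MeasurableSpace Ω] (P : Measure Ω) [IsProbabilityMeasure P]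
    (Φ Ψ : Ω → Measure (Vec d)) (hΦm : Measurable Φ) (hΨm : Measurable Ψ)
    (hbfΦ : ∀ᵐ ω ∂P, BddFinite (Φ ω)) (hbfΨ : ∀ᵐ ω ∂P, BddFinite (Ψ ω))
    (hstat : ∀ t : Vec d,
      P.map (fun ω => (shiftM t (Φ ω), shiftM t (Ψ ω))) = P.map (fun ω => (Φ ω, Ψ ω)))
    (lΦ lΨ : ℝ≥0∞)
    (hlΦ : lΦ = ∫⁻ ω, Φ ω (unitBox d) ∂P) (hlΨ : lΨ = ∫⁻ ω, Ψ ω (unitBox d) ∂P)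
    (hΦpos : 0 < lΦ) (hΦfin : lΦ < ⊤) (hΨpos : 0 < lΨ) (hΨfin : lΨ < ⊤)
    (PΦ PΨ : Measure (Measure (Vec d) × Measure (Vec d)))
    (hPΦ : ∀ B : Set (Measure (Vec d) × Measure (Vec d)), MeasurableSet B →
      PΦ B = lΦ⁻¹ * ∫⁻ ω, (∫⁻ x in unitBox d,
        B.indicator (fun _ => (1 : ℝ≥0∞)) (shiftM x (Φ ω), shiftM x (Ψ ω)) ∂(Φ ω)) ∂P)
    (hPΨ : ∀ B : Set (Measure (Vec d) × Measure (Vec d)), MeasurableSet B →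
      PΨ B = lΨ⁻¹ * ∫⁻ ω, (∫⁻ x in unitBox d,
        B.indicator (fun _ => (1 : ℝ≥0∞)) (shiftM x (Φ ω), shiftM x (Ψ ω)) ∂(Ψ ω)) ∂P)
    (g : Measure (Vec d) → Measure (Vec d) → Vec d → Vec d → ℝ≥0∞)
    (hgm : Measurable (fun p : (Measure (Vec d) × Measure (Vec d)) × Vec d × Vec d =>
      g p.1.1 p.1.2 p.2.1 p.2.2))
    (hgcov : ∀ (t x y : Vec d) (φ ψ : Measure (Vec d)),
      g (shiftM t φ) (shiftM t ψ) (x - t) (y - t) = g φ ψ x y) :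
    lΦ * ∫⁻ p, (∫⁻ y, g p.1 p.2 0 y ∂p.2) ∂PΦ
      = lΨ * ∫⁻ p, (∫⁻ y, g p.1 p.2 y 0 ∂p.1) ∂PΨ := by
  simpa only [lintegral_smul_measure, smul_eq_mul] using
    stmt15_general P Φ Ψ hΦm hΨm hbfΦ hbfΨ (fun t _ => hstat t) (lΦ • PΦ) (lΨ • PΨ)
      (fun B hB => by
        rw [Measure.smul_apply, hPΦ B hB, smul_eq_mul,
          ENNReal.mul_inv_cancel_left hΦpos.ne' hΦfin.ne])
      (fun B hB => by
        rw [Measure.smul_apply, hPΨ B hB, smul_eq_mul,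
          ENNReal.mul_inv_cancel_left hΨpos.ne' hΨfin.ne])
      g hgm hgcov
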